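/- For all w1, w2 ∈ H^1 one has S̃(w1 * w2) = S̃(w1) *̄ S̃(w2) and S̃(w1 ш w2) = S̃(w1) ш̄ S̃(w2). -/

import Mathlib

open scoped BigOperators

/-- The two-letter alphabet {x, y}. -/
inductive Letter : Type
  | x : Letter
  | y : Letter
deriving DecidableEq

/-- `H = ℚ⟨x,y⟩`, the noncommutative polynomial ring over ℚ in two
indeterminates, realized as the monoid algebra of the free monoid on `{x,y}`. -/
abbrev H : Type := MonoidAlgebra ℚ (FreeMonoid Letter)

namespace H

/-- The monomial (word) of `H` corresponding to an element of the free monoid. -/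
noncomputable def word (w : FreeMonoid Letter) : H := MonoidAlgebra.single w 1

/-- The generator `x`. -/
noncomputable def X : H := word (FreeMonoid.of Letter.x)

/-- The generator `y`. -/
noncomputable def Y : H := word (FreeMonoid.of Letter.y)

/-- The word `z_k = x^{k-1} y` (for `k ≥ 1`). -/
def zW (k : ℕ) : FreeMonoid Letter :=
  FreeMonoid.ofList (List.replicate (k - 1) Letter.x ++ [Letter.y])

/-- `z_k = x^{k-1} y` as an element of `H`. -/
noncomputable def z (k : ℕ) : H := word (zW k)

/-- A list `[k₁,…,kₙ]` gives the word `z_{k₁} z_{k₂} ⋯ z_{kₙ}`. -/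
def zListW (ks : List ℕ) : FreeMonoid Letter :=
  FreeMonoid.ofList (ks.flatMap fun k => List.replicate (k - 1) Letter.x ++ [Letter.y])

/-- `H¹ = ℚ + Hy` as a ℚ-submodule of `H`. -/
noncomputable def H1 : Submodule ℚ H :=
  LinearMap.range (LinearMap.mulRight ℚ Y) ⊔ Submodule.span ℚ {1}

/-- `H⁰ = ℚ + xHy` as a ℚ-submodule of `H`. -/
noncomputable def H0 : Submodule ℚ H :=
  LinearMap.range ((LinearMap.mulRight ℚ Y).comp (LinearMap.mulLeft ℚ X)) ⊔
    Submodule.span ℚ {1}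

/-- Parse a word of `H¹` into the exponent list of its `z`-decomposition:
`z_{k₁}⋯z_{kₙ} ↦ [k₁,…,kₙ]` (auxiliary accumulator version). -/
def toZAux : List Letter → ℕ → List ℕ
  | [], _ => []
  | Letter.x :: r, n => toZAux r (n + 1)
  | Letter.y :: r, n => (n + 1) :: toZAux r 0

/-- The `z`-decomposition of a word of `H¹`. -/
def toZ (w : FreeMonoid Letter) : List ℕ := toZAux (FreeMonoid.toList w) 0

/-- The harmonic product on words of `H¹` (via `z`-decompositions):
`1 * w = w * 1 = w` and
`z_k w₁ * z_l w₂ = z_k (w₁ * z_l w₂) + z_l (z_k w₁ * w₂) + z_{k+l} (w₁ * w₂)`. -/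
noncomputable def harmW : List ℕ → List ℕ → H
  | [], w => word (zListW w)
  | k :: w1, [] => word (zListW (k :: w1))
  | k :: w1, l :: w2 =>
      z k * harmW w1 (l :: w2) + z l * harmW (k :: w1) w2 + z (k + l) * harmW w1 w2
termination_by w1 w2 => w1.length + w2.length
decreasing_by all_goals simp [Nat.lt_succ_iff] <;> omega

/-- The n-harmonic product on words of `H¹`:
`1 *̄ w = w *̄ 1 = w` and
`z_k w₁ *̄ z_l w₂ = z_k (w₁ *̄ z_l w₂) + z_l (z_k w₁ *̄ w₂) − z_{k+l} (w₁ *̄ w₂)`. -/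
noncomputable def nharmW : List ℕ → List ℕ → H
  | [], w => word (zListW w)
  | k :: w1, [] => word (zListW (k :: w1))
  | k :: w1, l :: w2 =>
      z k * nharmW w1 (l :: w2) + z l * nharmW (k :: w1) w2 - z (k + l) * nharmW w1 w2
termination_by w1 w2 => w1.length + w2.length
decreasing_by all_goals simp [Nat.lt_succ_iff] <;> omega

/-- The harmonic product `*` on `H¹`, extended ℚ-bilinearly. -/
noncomputable def harm (a b : H) : H :=
  Finsupp.sum a.coeff fun w1 c1 =>
    Finsupp.sum b.coeff fun w2 c2 => (c1 * c2) • harmW (toZ w1) (toZ w2)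

/-- The n-harmonic product `*̄` on `H¹`, extended ℚ-bilinearly. -/
noncomputable def nharm (a b : H) : H :=
  Finsupp.sum a.coeff fun w1 c1 =>
    Finsupp.sum b.coeff fun w2 c2 => (c1 * c2) • nharmW (toZ w1) (toZ w2)

/-- The letter exchange `τ(x) = y`, `τ(y) = x`. -/
def τ : Letter → Letter
  | Letter.x => Letter.y
  | Letter.y => Letter.x

/-- `δ(w) = 1` if `w` is the empty word, `0` otherwise. -/
def δ : List Letter → ℚ
  | [] => 1
  | _ :: _ => 0

/-- The shuffle product on words:
`1 ш w = w ш 1 = w` and `u₁w₁ ш u₂w₂ = u₁(w₁ ш u₂w₂) + u₂(u₁w₁ ш w₂)`. -/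
noncomputable def shW : List Letter → List Letter → H
  | [], w => word (FreeMonoid.ofList w)
  | u :: w, [] => word (FreeMonoid.ofList (u :: w))
  | u1 :: w1, u2 :: w2 =>
      word (FreeMonoid.of u1) * shW w1 (u2 :: w2) +
        word (FreeMonoid.of u2) * shW (u1 :: w1) w2
termination_by w1 w2 => w1.length + w2.length
decreasing_by all_goals simp [Nat.lt_succ_iff]

/-- The n-shuffle product on words: `1 ш̄ w = w ш̄ 1 = w` and
`u₁w₁ ш̄ u₂w₂ = u₁(w₁ ш̄ u₂w₂) + u₂(u₁w₁ ш̄ w₂) − δ(w₁)τ(u₁)u₂w₂ − δ(w₂)τ(u₂)u₁w₁`. -/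
noncomputable def nshW : List Letter → List Letter → H
  | [], w => word (FreeMonoid.ofList w)
  | u :: w, [] => word (FreeMonoid.ofList (u :: w))
  | u1 :: w1, u2 :: w2 =>
      word (FreeMonoid.of u1) * nshW w1 (u2 :: w2) +
        word (FreeMonoid.of u2) * nshW (u1 :: w1) w2 -
        δ w1 • word (FreeMonoid.ofList (τ u1 :: u2 :: w2)) -
        δ w2 • word (FreeMonoid.ofList (τ u2 :: u1 :: w1))
termination_by w1 w2 => w1.length + w2.length
decreasing_by all_goals simp [Nat.lt_succ_iff]

/-- The shuffle product `ш` on `H`, extended ℚ-bilinearly. -/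
noncomputable def sh (a b : H) : H :=
  Finsupp.sum a.coeff fun w1 c1 =>
    Finsupp.sum b.coeff fun w2 c2 =>
      (c1 * c2) • shW (FreeMonoid.toList w1) (FreeMonoid.toList w2)

/-- The n-shuffle product `ш̄` on `H`, extended ℚ-bilinearly. -/
noncomputable def nsh (a b : H) : H :=
  Finsupp.sum a.coeff fun w1 c1 =>
    Finsupp.sum b.coeff fun w2 c2 =>
      (c1 * c2) • nshW (FreeMonoid.toList w1) (FreeMonoid.toList w2)

/-- `S₁`: the ℚ-algebra endomorphism of `H` with `S₁(x) = x`, `S₁(y) = x + y`. -/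
noncomputable def S1 : H →ₐ[ℚ] H :=
  MonoidAlgebra.lift ℚ H (FreeMonoid Letter)
    (FreeMonoid.lift fun u => match u with
      | Letter.x => X
      | Letter.y => X + Y)

/-- `S₂`: the ℚ-algebra endomorphism of `H` with `S₂(x) = x`, `S₂(y) = y − x`. -/
noncomputable def S2 : H →ₐ[ℚ] H :=
  MonoidAlgebra.lift ℚ H (FreeMonoid Letter)
    (FreeMonoid.lift fun u => match u with
      | Letter.x => X
      | Letter.y => Y - X)

/-- `S` on a word: `S(1) = 1` and `S(Fy) = S₁(F)y`. -/
noncomputable def SW (w : FreeMonoid Letter) : H :=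
  match (FreeMonoid.toList w).getLast? with
  | some Letter.y =>
      S1 (word (FreeMonoid.ofList (FreeMonoid.toList w).dropLast)) * Y
  | _ => word w

/-- The ℚ-linear map `S : H¹ → H¹` with `S(1) = 1`, `S(Fy) = S₁(F)y`. -/
noncomputable def S (a : H) : H := Finsupp.sum a.coeff fun w c => c • SW w

/-- `S̃` on a word: `S̃(1) = 1` and `S̃(Fy) = S₂(F)y`. -/
noncomputable def StW (w : FreeMonoid Letter) : H :=
  match (FreeMonoid.toList w).getLast? with
  | some Letter.y =>
      S2 (word (FreeMonoid.ofList (FreeMonoid.toList w).dropLast)) * Y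
  | _ => word w

/-- The ℚ-linear map `S̃ : H¹ → H¹` with `S̃(1) = 1`, `S̃(Fy) = S₂(F)y`. -/
noncomputable def St (a : H) : H := Finsupp.sum a.coeff fun w c => c • StW w

/-- The multiple zeta value `ζ(k₁,…,kₙ)`: the sum over strictly decreasing
tuples `m₁ > m₂ > ⋯ > mₙ > 0` of `1/(m₁^{k₁}⋯mₙ^{kₙ})`. -/
noncomputable def mzeta (ks : List ℕ) : ℝ :=
  ∑' m : {f : Fin ks.length → ℕ // (∀ i, 0 < f i) ∧
      ∀ i j : Fin ks.length, i < j → f j < f i},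
    ∏ i : Fin ks.length, ((m.1 i : ℝ) ^ ks.get i)⁻¹

/-- The non-strict multiple zeta value `ζ̄(k₁,…,kₙ)`: the sum over weakly
decreasing tuples `m₁ ≥ m₂ ≥ ⋯ ≥ mₙ > 0` of `1/(m₁^{k₁}⋯mₙ^{kₙ})`. -/
noncomputable def nmzeta (ks : List ℕ) : ℝ :=
  ∑' m : {f : Fin ks.length → ℕ // (∀ i, 0 < f i) ∧
      ∀ i j : Fin ks.length, i ≤ j → f j ≤ f i},
    ∏ i : Fin ks.length, ((m.1 i : ℝ) ^ ks.get i)⁻¹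

/-- The evaluation map `Z : H⁰ → ℝ`, `Z(1) = 1`,
`Z(z_{k₁}⋯z_{kₙ}) = ζ(k₁,…,kₙ)` (extended ℚ-linearly to `H`). -/
noncomputable def Z (a : H) : ℝ := Finsupp.sum a.coeff fun w c => (c : ℝ) * mzeta (toZ w)

/-- The n-evaluation map `Z̄ : H⁰ → ℝ`, `Z̄(1) = 1`,
`Z̄(z_{k₁}⋯z_{kₙ}) = ζ̄(k₁,…,kₙ)` (extended ℚ-linearly to `H`). -/
noncomputable def Zbar (a : H) : ℝ := Finsupp.sum a.coeff fun w c => (c : ℝ) * nmzeta (toZ w)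

/-- `i`-fold n-harmonic power: `a^{*̄ 0} = 1`, `a^{*̄ (i+1)} = a *̄ a^{*̄ i}`. -/
noncomputable def nharmPow : ℕ → H → H
  | 0, _ => 1
  | i + 1, a => nharm a (nharmPow i a)

/-- `i`-fold n-shuffle power: `a^{ш̄ 0} = 1`, `a^{ш̄ (i+1)} = a ш̄ a^{ш̄ i}`. -/
noncomputable def nshPow : ℕ → H → H
  | 0, _ => 1
  | i + 1, a => nsh a (nshPow i a)

end H

open H

/-!
Since `H = H¹ ⊕ Hx`, the space `H¹` is the left `H`-module `H / Hx`, on which `x` acts by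
`a ↦ x (a - ε a)` with `ε` the augmentation, and `S̃` is the map that `S₂` induces there. Hence
`S̃ (z_k a) = z_k S̃(a) - x^k (S̃(a) - ε a)`, without exception for constant `a`.

Let `D_k a = x^k (a - ε a)`. Each `A ∈ {z_k, D_k}` and `B ∈ {z_l, D_l}` satisfy
`A P *̄ B Q = A (P *̄ B Q) + B (A P *̄ Q) - C (P *̄ Q)` on `H¹`, where `C = D_{k+l}` if
`A = D_k` and `B = D_l`, and `C = z_{k+l}` otherwise. Expanding by bilinearity, the operators
`z_k - D_k` satisfy the recursion of `*`, so `S̃ (w₁ * w₂)` and `S̃(w₁) *̄ S̃(w₂)` agree by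
induction. For the shuffle products, left multiplication by `x` and the operator `y - D_1` play the
same role: the constant terms dropped by `D_1` account for the `δ`-terms in the recursion of `ш̄`.
-/

namespace H

open Module FreeMonoid

/-! ### Linear extension from words -/

/-- The words, as a basis of `H`. -/
noncomputable def wordBasis : Basis (FreeMonoid Letter) ℚ H := MonoidAlgebra.basis _ _

theorem wordBasis_apply (w : FreeMonoid Letter) : wordBasis w = word w := by
  simp [wordBasis, word]

section

variable {M : Type*} [AddCommGroup M] [Module ℚ M]

/-- The linear map with prescribed values on words. -/
noncomputable def wordLift (f : FreeMonoid Letter → M) : H →ₗ[ℚ] M := wordBasis.constr ℚ f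

theorem wordLift_apply (f : FreeMonoid Letter → M) (a : H) :
    wordLift f a = a.coeff.sum fun w c => c • f w :=
  wordBasis.constr_apply ℚ f a

theorem wordLift_word (f : FreeMonoid Letter → M) (w : FreeMonoid Letter) :
    wordLift f (word w) = f w := by
  rw [← wordBasis_apply, wordLift, Basis.constr_basis]

/-- The bilinear map with prescribed values on pairs of words. -/
noncomputable def wordLift₂ (f : FreeMonoid Letter → FreeMonoid Letter → M) :
    H →ₗ[ℚ] H →ₗ[ℚ] M :=
  wordLift fun v => wordLift (f v)

theorem wordLift₂_apply (f : FreeMonoid Letter → FreeMonoid Letter → M) (a b : H) :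
    wordLift₂ f a b =
      a.coeff.sum fun v c => b.coeff.sum fun w d => (c * d) • f v w := by
  simp only [wordLift₂, wordLift_apply, Finsupp.sum, LinearMap.sum_apply, LinearMap.smul_apply,
    Finset.smul_sum, mul_smul]

theorem wordLift₂_word (f : FreeMonoid Letter → FreeMonoid Letter → M)
    (v w : FreeMonoid Letter) : wordLift₂ f (word v) (word w) = f v w := by
  rw [wordLift₂, wordLift_word, wordLift_word]

theorem linearMap_ext_word {f g : H →ₗ[ℚ] M} (h : ∀ w, f (word w) = g (word w)) : f = g :=
  wordBasis.ext fun w => by rw [wordBasis_apply, h]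

theorem bilin_ext_word {f g : H →ₗ[ℚ] H →ₗ[ℚ] M}
    (h : ∀ v w, f (word v) (word w) = g (word v) (word w)) : f = g :=
  LinearMap.ext_basis wordBasis wordBasis fun v w => by
    rw [wordBasis_apply, wordBasis_apply, h]

end

/-- `S̃` as a linear map. -/
noncomputable def StLin : H →ₗ[ℚ] H := wordLift StW

/-- `*` as a bilinear map. -/
noncomputable def harmBilin : H →ₗ[ℚ] H →ₗ[ℚ] H :=
  wordLift₂ fun v w => harmW (toZ v) (toZ w)

/-- `*̄` as a bilinear map. -/
noncomputable def nharmBilin : H →ₗ[ℚ] H →ₗ[ℚ] H :=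
  wordLift₂ fun v w => nharmW (toZ v) (toZ w)

/-- `ш` as a bilinear map. -/
noncomputable def shBilin : H →ₗ[ℚ] H →ₗ[ℚ] H :=
  wordLift₂ fun v w => shW (toList v) (toList w)

/-- `ш̄` as a bilinear map. -/
noncomputable def nshBilin : H →ₗ[ℚ] H →ₗ[ℚ] H :=
  wordLift₂ fun v w => nshW (toList v) (toList w)

theorem StLin_apply (a : H) : StLin a = St a := wordLift_apply _ a

theorem harmBilin_apply (a b : H) : harmBilin a b = harm a b := wordLift₂_apply _ a b

theorem nharmBilin_apply (a b : H) : nharmBilin a b = nharm a b := wordLift₂_apply _ a b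

theorem shBilin_apply (a b : H) : shBilin a b = sh a b := wordLift₂_apply _ a b

theorem nshBilin_apply (a b : H) : nshBilin a b = nsh a b := wordLift₂_apply _ a b

/-! ### Words and the augmentation -/

theorem word_one : word 1 = 1 := rfl

theorem word_of_x : word (of Letter.x) = X := rfl

theorem word_of_y : word (of Letter.y) = Y := rfl

theorem word_mul (v w : FreeMonoid Letter) : word (v * w) = word v * word w := by
  simp [word, MonoidAlgebra.single_mul_single]

theorem word_ofList_cons (u : Letter) (l : List Letter) :
    word (ofList (u :: l)) = word (of u) * word (ofList l) := by
  rw [ofList_cons, word_mul]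

theorem word_zListW_cons (k : ℕ) (ks : List ℕ) :
    word (zListW (k :: ks)) = z k * word (zListW ks) := by
  rw [z, ← word_mul]
  rfl

theorem z_succ (n : ℕ) : z (n + 1) = X ^ n * Y := by
  induction n with
  | zero => rw [pow_zero, one_mul]; rfl
  | succ n ih => rw [pow_succ', mul_assoc, ← ih]; exact word_ofList_cons _ _

theorem z_add {k : ℕ} (hk : 0 < k) (n : ℕ) : z (k + n) = X ^ n * z k := by
  obtain ⟨i, rfl⟩ := Nat.exists_eq_succ_of_ne_zero hk.ne'
  rw [Nat.succ_add, z_succ, z_succ, ← mul_assoc, ← pow_add, add_comm]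

/-- The augmentation `ε : H → ℚ`, which takes the coefficient of the empty word. -/
noncomputable def augmentation : H →ₐ[ℚ] ℚ :=
  MonoidAlgebra.lift ℚ ℚ (FreeMonoid Letter) (FreeMonoid.lift fun _ => 0)

local notation "ε" => augmentation

theorem augmentation_letter (u : Letter) : ε (word (of u)) = 0 := by
  simp [augmentation, word, MonoidAlgebra.lift_single]

theorem augmentation_word_ofList (l : List Letter) : ε (word (ofList l)) = δ l := by
  cases l with
  | nil => exact map_one ε
  | cons u l => rw [word_ofList_cons, map_mul, augmentation_letter, zero_mul, δ]

theorem augmentation_Y : ε Y = 0 := augmentation_letter _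

theorem augmentation_z {k : ℕ} (hk : 0 < k) : ε (z k) = 0 := by
  obtain ⟨i, rfl⟩ := Nat.exists_eq_succ_of_ne_zero hk.ne'
  rw [z_succ, map_mul, augmentation_Y, mul_zero]

/-! ### The subspace `H¹` -/

theorem mem_H1_iff {a : H} : a ∈ H1 ↔ ∃ (c : H) (r : ℚ), a = c * Y + r • 1 := by
  simp only [H1, Submodule.mem_sup, LinearMap.mem_range, Submodule.mem_span_singleton,
    LinearMap.mulRight_apply]
  constructor
  · rintro ⟨_, ⟨c, rfl⟩, _, ⟨r, rfl⟩, rfl⟩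
    exact ⟨c, r, rfl⟩
  · rintro ⟨c, r, rfl⟩
    exact ⟨_, ⟨c, rfl⟩, _, ⟨r, rfl⟩, rfl⟩

theorem one_mem_H1 : (1 : H) ∈ H1 := mem_H1_iff.2 ⟨0, 1, by simp⟩

theorem mul_Y_mem_H1 (a : H) : a * Y ∈ H1 := mem_H1_iff.2 ⟨a, 0, by simp⟩

theorem mul_mem_H1 {a b : H} (ha : a ∈ H1) (hb : b ∈ H1) : a * b ∈ H1 := by
  obtain ⟨c, r, rfl⟩ := mem_H1_iff.1 hb
  rw [mul_add, ← mul_assoc, mul_smul_comm, mul_one]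
  exact add_mem (mul_Y_mem_H1 _) (Submodule.smul_mem _ r ha)

theorem mul_mem_H1_of_augmentation_eq_zero (a : H) {b : H} (hb : b ∈ H1) (hε : ε b = 0) :
    a * b ∈ H1 := by
  obtain ⟨c, r, rfl⟩ := mem_H1_iff.1 hb
  obtain rfl : r = 0 := by simpa [augmentation_Y] using hε
  rw [zero_smul, add_zero, ← mul_assoc]
  exact mul_Y_mem_H1 _

theorem z_mem_H1 {k : ℕ} (hk : 0 < k) : z k ∈ H1 := by
  obtain ⟨i, rfl⟩ := Nat.exists_eq_succ_of_ne_zero hk.ne'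
  rw [z_succ]
  exact mul_Y_mem_H1 _

theorem word_zListW_mem_H1 {ks : List ℕ} (hks : ∀ k ∈ ks, 0 < k) : word (zListW ks) ∈ H1 := by
  induction ks with
  | nil => exact one_mem_H1
  | cons k ks ih =>
    rw [List.forall_mem_cons] at hks
    rw [word_zListW_cons]
    exact mul_mem_H1 (z_mem_H1 hks.1) (ih hks.2)

/-- The words that lie in `H¹`: the empty word and the words ending in `y`. -/
def IsH1Word (l : List Letter) : Prop := ∀ u ∈ l.getLast?, u = Letter.y

theorem isH1Word_cons_iff {u : Letter} {l : List Letter} :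
    IsH1Word (u :: l) ↔ IsH1Word l ∧ (l = [] → u = Letter.y) := by
  cases l <;> simp [IsH1Word]

theorem IsH1Word.mem_H1 {l : List Letter} (hl : IsH1Word l) : word (ofList l) ∈ H1 := by
  rcases l.eq_nil_or_concat' with rfl | ⟨m, u, rfl⟩
  · exact one_mem_H1
  · obtain rfl : u = Letter.y := hl u (by simp)
    rw [ofList_append, word_mul]
    exact mul_Y_mem_H1 _

theorem IsH1Word.augmentation_tail_eq_zero {u : Letter} {l : List Letter} (hl : IsH1Word (u :: l))
    (hu : u = Letter.x) : ε (word (ofList l)) = 0 := by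
  cases l with
  | nil => exact nomatch hu.symm.trans ((isH1Word_cons_iff.1 hl).2 rfl)
  | cons t l => rw [augmentation_word_ofList, δ]

theorem H1_eq_span_words :
    H1 = Submodule.span ℚ ((fun l => word (ofList l)) '' {l | IsH1Word l}) := by
  apply le_antisymm
  · refine sup_le ?_ (Submodule.span_mono ?_)
    · rw [LinearMap.range_eq_map, ← wordBasis.span_eq, Submodule.map_span]
      refine Submodule.span_mono ?_
      rintro _ ⟨_, ⟨w, rfl⟩, rfl⟩
      refine ⟨toList w ++ [Letter.y], by simp [IsH1Word], ?_⟩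
      simp [wordBasis_apply, ofList_append, word_mul, Y]
    · rintro _ rfl
      exact ⟨[], by simp [IsH1Word], rfl⟩
  · rw [Submodule.span_le]
    rintro _ ⟨l, hl, rfl⟩
    exact hl.mem_H1

theorem bilin_eqOn_H1 {M : Type*} [AddCommGroup M] [Module ℚ M] {f g : H →ₗ[ℚ] H →ₗ[ℚ] M}
    (h : ∀ l, IsH1Word l → ∀ m, IsH1Word m →
      f (word (ofList l)) (word (ofList m)) = g (word (ofList l)) (word (ofList m)))
    {a b : H} (ha : a ∈ H1) (hb : b ∈ H1) : f a b = g a b := by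
  rw [H1_eq_span_words] at ha hb
  refine LinearMap.eqOn_span (f := f.flip b) (g := g.flip b) ?_ ha
  rintro _ ⟨l, hl, rfl⟩
  refine LinearMap.eqOn_span (f := f _) (g := g _) ?_ hb
  rintro _ ⟨m, hm, rfl⟩
  exact h l hl m hm

theorem IsH1Word.exists_eq_z_mul {l : List Letter} (hl : IsH1Word l) (hne : l ≠ []) :
    ∃ k > 0, ∃ q ∈ H1, word (ofList l) = z k * q := by
  induction l with
  | nil => contradiction
  | cons u l ih =>
    obtain ⟨hl', hu⟩ := isH1Word_cons_iff.1 hl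
    cases u with
    | y => exact ⟨1, one_pos, word (ofList l), hl'.mem_H1, word_ofList_cons _ _⟩
    | x =>
      obtain ⟨k, hk, q, hq, h_eq⟩ := ih hl' fun h => nomatch hu h
      refine ⟨k + 1, k.succ_pos, q, hq, ?_⟩
      rw [word_ofList_cons, h_eq, z_add hk, pow_one, mul_assoc, X]

theorem linearMap_eqOn_H1 {M : Type*} [AddCommGroup M] [Module ℚ M] {f g : H →ₗ[ℚ] M}
    (h_one : f 1 = g 1) (h_z : ∀ k > 0, ∀ q ∈ H1, f (z k * q) = g (z k * q)) {a : H}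
    (ha : a ∈ H1) : f a = g a := by
  rw [H1_eq_span_words] at ha
  refine LinearMap.eqOn_span ?_ ha
  rintro _ ⟨l, hl, rfl⟩
  by_cases hne : l = []
  · rw [hne]
    exact h_one
  · obtain ⟨k, hk, q, hq, h_eq⟩ := hl.exists_eq_z_mul hne
    simp only [h_eq, h_z k hk q hq]

/-! ### The map `S̃` -/

theorem S2_X : S2 X = X := by
  simp [S2, X, word, MonoidAlgebra.lift_single]

theorem S2_Y : S2 Y = Y - X := by
  simp [S2, Y, word, MonoidAlgebra.lift_single]

theorem StLin_one : StLin 1 = 1 := wordLift_word _ 1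

theorem StLin_mul_Y (a : H) : StLin (a * Y) = S2 a * Y := by
  suffices StLin ∘ₗ LinearMap.mulRight ℚ Y = LinearMap.mulRight ℚ Y ∘ₗ S2.toLinearMap from
    LinearMap.congr_fun this a
  refine linearMap_ext_word fun w => ?_
  simp only [LinearMap.comp_apply, LinearMap.mulRight_apply, AlgHom.toLinearMap_apply]
  rw [Y, ← word_mul, StLin, wordLift_word]
  simp [StW, Y]

theorem StLin_z {k : ℕ} (hk : 0 < k) : StLin (z k) = z k := by
  obtain ⟨i, rfl⟩ := Nat.exists_eq_succ_of_ne_zero hk.ne'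
  rw [z_succ, StLin_mul_Y, map_pow, S2_X]

theorem StLin_mul (a : H) {b : H} (hb : b ∈ H1) :
    StLin (a * b) = S2 a * (StLin b - ε b • 1) + ε b • StLin a := by
  obtain ⟨c, r, rfl⟩ := mem_H1_iff.1 hb
  have hε : ε (c * Y + r • 1) = r := by simp [augmentation_Y]
  rw [hε, mul_add, ← mul_assoc, mul_smul_comm, mul_one, map_add, map_add, map_smul, map_smul,
    StLin_mul_Y, StLin_mul_Y, StLin_one, add_sub_cancel_right, map_mul, mul_assoc]

theorem StLin_mul_of_augmentation_eq_zero (a : H) {b : H} (hb : b ∈ H1) (hε : ε b = 0) :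
    StLin (a * b) = S2 a * StLin b := by
  rw [StLin_mul a hb, hε, zero_smul, zero_smul, sub_zero, add_zero]

theorem StLin_mem_H1 {a : H} (ha : a ∈ H1) : StLin a ∈ H1 := by
  obtain ⟨c, r, rfl⟩ := mem_H1_iff.1 ha
  exact mem_H1_iff.2 ⟨S2 c, r, by rw [map_add, map_smul, StLin_mul_Y, StLin_one]⟩

theorem augmentation_StLin {a : H} (ha : a ∈ H1) : ε (StLin a) = ε a := by
  obtain ⟨c, r, rfl⟩ := mem_H1_iff.1 ha
  simp [StLin_mul_Y, StLin_one, augmentation_Y]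

/-! ### The harmonic products -/

/-- The operator `a ↦ x^k (a - ε a)`: the action of `x^k` on `H¹ ≅ H / Hx`. -/
noncomputable def xShift (k : ℕ) : H →ₗ[ℚ] H :=
  LinearMap.mulLeft ℚ (X ^ k) ∘ₗ (LinearMap.id - augmentation.toLinearMap.smulRight 1)

theorem xShift_apply (k : ℕ) (a : H) : xShift k a = X ^ k * (a - ε a • 1) := rfl

theorem xShift_one (k : ℕ) : xShift k 1 = 0 := by simp [xShift_apply]

theorem xShift_z_mul (k : ℕ) {i : ℕ} (hi : 0 < i) (a : H) :
    xShift k (z i * a) = z (i + k) * a := by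
  rw [xShift_apply, map_mul, augmentation_z hi, zero_mul, zero_smul, sub_zero, z_add hi, mul_assoc]

theorem xShift_xShift (k l : ℕ) (a : H) : xShift k (xShift l a) = xShift (l + k) a := by
  have hε : ε (X ^ l * (a - ε a • 1)) = 0 := by simp
  rw [xShift_apply, xShift_apply, hε, zero_smul, sub_zero, xShift_apply, ← mul_assoc, ← pow_add,
    add_comm]

theorem xShift_mem_H1 (k : ℕ) {a : H} (ha : a ∈ H1) : xShift k a ∈ H1 :=
  mul_mem_H1_of_augmentation_eq_zero _ (sub_mem ha (Submodule.smul_mem _ _ one_mem_H1)) (by simp)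

/-- The operator `z_k - D_k`, with `D_k = xShift k`, which corresponds under `S̃` to left
multiplication by `z_k`. -/
noncomputable def zTwist (k : ℕ) : H →ₗ[ℚ] H := LinearMap.mulLeft ℚ (z k) - xShift k

theorem zTwist_apply (k : ℕ) (a : H) : zTwist k a = z k * a - xShift k a := rfl

theorem StLin_z_mul {k : ℕ} (hk : 0 < k) {a : H} (ha : a ∈ H1) :
    StLin (z k * a) = zTwist k (StLin a) := by
  have hS2 : S2 (z k) = z k - X ^ k := by
    obtain ⟨i, rfl⟩ := Nat.exists_eq_succ_of_ne_zero hk.ne'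
    rw [z_succ, map_mul, map_pow, S2_X, S2_Y, mul_sub, pow_succ]
  rw [StLin_mul _ ha, StLin_z hk, hS2, zTwist_apply, xShift_apply, augmentation_StLin ha, sub_mul,
    mul_sub (z k), mul_smul_comm, mul_one]
  abel

theorem toZAux_replicate_append (n i : ℕ) (l : List Letter) :
    toZAux (List.replicate i Letter.x ++ Letter.y :: l) n = (n + i + 1) :: toZAux l 0 := by
  induction i generalizing n with
  | zero => rfl
  | succ i ih =>
    rw [List.replicate_succ, List.cons_append, toZAux, ih, Nat.add_right_comm n 1 i, add_assoc n i]

theorem toZ_zW_mul {k : ℕ} (hk : 0 < k) (w : FreeMonoid Letter) : toZ (zW k * w) = k :: toZ w := by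
  have h : toList (zW k * w) = List.replicate (k - 1) Letter.x ++ Letter.y :: toList w := by
    simp [zW]
  rw [toZ, h, toZAux_replicate_append, zero_add, Nat.sub_add_cancel hk, toZ]

theorem pos_of_mem_toZAux {l : List Letter} {n k : ℕ} (hk : k ∈ toZAux l n) : 0 < k := by
  induction l, n using toZAux.induct <;> grind [toZAux]

theorem pos_of_mem_toZ {w : FreeMonoid Letter} {k : ℕ} (hk : k ∈ toZ w) : 0 < k :=
  pos_of_mem_toZAux hk

theorem IsH1Word.flatMap_toZAux {l : List Letter} (hl : IsH1Word l) {n : ℕ}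
    (hn : l = [] → n = 0) :
    (toZAux l n).flatMap (fun k => List.replicate (k - 1) Letter.x ++ [Letter.y]) =
      List.replicate n Letter.x ++ l := by
  induction l generalizing n with
  | nil => simp [toZAux, hn rfl]
  | cons u l ih =>
    obtain ⟨hl', hu⟩ := isH1Word_cons_iff.1 hl
    cases u with
    | x =>
      rw [toZAux, ih hl' (fun h => nomatch hu h), List.replicate_succ', List.append_assoc,
        List.singleton_append]
    | y => simp [toZAux, ih hl' fun _ => rfl]

theorem IsH1Word.zListW_toZ {l : List Letter} (hl : IsH1Word l) :
    zListW (toZ (ofList l)) = ofList l :=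
  congrArg ofList (hl.flatMap_toZAux fun _ => rfl)

theorem nharmW_nil_right (ks : List ℕ) : nharmW ks [] = word (zListW ks) := by
  cases ks <;> rw [nharmW]

theorem nharmW_comm (ks ls : List ℕ) : nharmW ks ls = nharmW ls ks := by
  induction ks, ls using nharmW.induct with
  | case1 ls => rw [nharmW, nharmW_nil_right]
  | case2 k ks => rw [nharmW, nharmW]
  | case3 k ks l ls ih₁ ih₂ ih₃ =>
    rw [nharmW, nharmW, ih₁, ih₂, ih₃, add_comm k l, add_comm (z k * _)]

theorem nharmBilin_comm (a b : H) : nharmBilin a b = nharmBilin b a := by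
  suffices nharmBilin = nharmBilin.flip from LinearMap.congr_fun₂ this a b
  refine bilin_ext_word fun v w => ?_
  simp only [LinearMap.flip_apply, nharmBilin, wordLift₂_word, nharmW_comm]

theorem nharmBilin_one_left {a : H} (ha : a ∈ H1) : nharmBilin 1 a = a := by
  rw [H1_eq_span_words] at ha
  refine LinearMap.eqOn_span (f := nharmBilin 1) (g := LinearMap.id) ?_ ha
  rintro _ ⟨l, hl, rfl⟩
  have h_nil : toZ 1 = [] := rfl
  simp only [nharmBilin, ← word_one, wordLift₂_word, h_nil, nharmW, hl.zListW_toZ,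
    LinearMap.id_apply]

theorem nharmBilin_z_mul_z_mul {k l : ℕ} (hk : 0 < k) (hl : 0 < l) (P Q : H) :
    nharmBilin (z k * P) (z l * Q) = z k * nharmBilin P (z l * Q) +
      z l * nharmBilin (z k * P) Q - z (k + l) * nharmBilin P Q := by
  let mulZ (i : ℕ) : H →ₗ[ℚ] H := LinearMap.mulLeft ℚ (z i)
  suffices nharmBilin.compl₁₂ (mulZ k) (mulZ l) =
      (nharmBilin.compl₁₂ .id (mulZ l)).compr₂ (mulZ k) +
        (nharmBilin.compl₁₂ (mulZ k) .id).compr₂ (mulZ l) - nharmBilin.compr₂ (mulZ (k + l)) from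
    LinearMap.congr_fun₂ this P Q
  refine bilin_ext_word fun v w => ?_
  simp only [mulZ, LinearMap.compl₁₂_apply, LinearMap.compr₂_apply, LinearMap.add_apply,
    LinearMap.sub_apply, LinearMap.mulLeft_apply, LinearMap.id_apply, nharmBilin]
  simp only [z, ← word_mul, wordLift₂_word, toZ_zW_mul hk, toZ_zW_mul hl]
  rw [nharmW, z, z, z]

theorem nharmBilin_z_mul_xShift {k : ℕ} (hk : 0 < k) (l : ℕ) {P Q : H} (hP : P ∈ H1)
    (hQ : Q ∈ H1) :
    nharmBilin (z k * P) (xShift l Q) = z k * nharmBilin P (xShift l Q) +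
      xShift l (nharmBilin (z k * P) Q) - z (k + l) * nharmBilin P Q := by
  refine linearMap_eqOn_H1 (f := nharmBilin (z k * P) ∘ₗ xShift l)
    (g := LinearMap.mulLeft ℚ (z k) ∘ₗ nharmBilin P ∘ₗ xShift l +
      xShift l ∘ₗ nharmBilin (z k * P) - LinearMap.mulLeft ℚ (z (k + l)) ∘ₗ nharmBilin P)
    ?_ (fun j hj q _ => ?_) hQ <;>
  simp only [LinearMap.comp_apply, LinearMap.add_apply, LinearMap.sub_apply,
    LinearMap.mulLeft_apply]
  · rw [nharmBilin_comm _ 1, nharmBilin_comm _ 1, nharmBilin_one_left hP,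
      nharmBilin_one_left (mul_mem_H1 (z_mem_H1 hk) hP), xShift_z_mul l hk, xShift_one]
    simp
  · rw [xShift_z_mul l hj, nharmBilin_z_mul_z_mul hk (Nat.add_pos_left hj l),
      nharmBilin_z_mul_z_mul hk hj, map_sub, map_add, xShift_z_mul l hk, xShift_z_mul l hj,
      xShift_z_mul l (Nat.add_pos_left hk j), ← add_assoc]
    abel

theorem nharmBilin_xShift_z_mul (k : ℕ) {l : ℕ} (hl : 0 < l) {P Q : H} (hP : P ∈ H1)
    (hQ : Q ∈ H1) :
    nharmBilin (xShift k P) (z l * Q) = xShift k (nharmBilin P (z l * Q)) +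
      z l * nharmBilin (xShift k P) Q - z (k + l) * nharmBilin P Q := by
  rw [nharmBilin_comm, nharmBilin_z_mul_xShift hl k hQ hP, nharmBilin_comm Q, nharmBilin_comm _ P,
    nharmBilin_comm Q, add_comm l k, add_comm (z l * _)]

theorem nharmBilin_xShift_xShift (k l : ℕ) {P Q : H} (hP : P ∈ H1) (hQ : Q ∈ H1) :
    nharmBilin (xShift k P) (xShift l Q) = xShift k (nharmBilin P (xShift l Q)) +
      xShift l (nharmBilin (xShift k P) Q) - xShift (k + l) (nharmBilin P Q) := by
  refine linearMap_eqOn_H1 (f := nharmBilin.flip (xShift l Q) ∘ₗ xShift k)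
    (g := xShift k ∘ₗ nharmBilin.flip (xShift l Q) +
      xShift l ∘ₗ nharmBilin.flip Q ∘ₗ xShift k - xShift (k + l) ∘ₗ nharmBilin.flip Q)
    ?_ (fun i hi p hp => ?_) hP <;>
  simp only [LinearMap.comp_apply, LinearMap.add_apply, LinearMap.sub_apply,
    LinearMap.flip_apply]
  · rw [xShift_one, map_zero, LinearMap.zero_apply, LinearMap.zero_apply, map_zero,
      nharmBilin_one_left hQ, nharmBilin_one_left (xShift_mem_H1 l hQ), xShift_xShift,
      add_comm k l, add_zero, sub_self]
  · rw [xShift_z_mul k hi, nharmBilin_z_mul_xShift (Nat.add_pos_left hi k) l hp hQ,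
      nharmBilin_z_mul_xShift hi l hp hQ, map_sub, map_add, xShift_z_mul k hi,
      xShift_z_mul k (Nat.add_pos_left hi l), xShift_xShift, add_comm l k, add_right_comm i k l]
    abel

theorem nharmBilin_zTwist_zTwist {k l : ℕ} (hk : 0 < k) (hl : 0 < l) {P Q : H} (hP : P ∈ H1)
    (hQ : Q ∈ H1) :
    nharmBilin (zTwist k P) (zTwist l Q) = zTwist k (nharmBilin P (zTwist l Q)) +
      zTwist l (nharmBilin (zTwist k P) Q) + zTwist (k + l) (nharmBilin P Q) := by
  simp only [zTwist_apply, map_sub, LinearMap.sub_apply, nharmBilin_z_mul_z_mul hk hl,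
    nharmBilin_z_mul_xShift hk l hP hQ, nharmBilin_xShift_z_mul k hl hP hQ,
    nharmBilin_xShift_xShift k l hP hQ]
  abel

theorem harmW_mem_H1 {ks ls : List ℕ} (hks : ∀ k ∈ ks, 0 < k) (hls : ∀ l ∈ ls, 0 < l) :
    harmW ks ls ∈ H1 := by
  induction ks, ls using harmW.induct with
  | case1 ls => rw [harmW]; exact word_zListW_mem_H1 hls
  | case2 k ks => rw [harmW]; exact word_zListW_mem_H1 hks
  | case3 k ks l ls ih₁ ih₂ ih₃ =>
    obtain ⟨hk, hks'⟩ := List.forall_mem_cons.1 hks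
    obtain ⟨hl, hls'⟩ := List.forall_mem_cons.1 hls
    rw [harmW]
    exact add_mem (add_mem (mul_mem_H1 (z_mem_H1 hk) (ih₁ hks' hls))
      (mul_mem_H1 (z_mem_H1 hl) (ih₂ hks hls')))
      (mul_mem_H1 (z_mem_H1 (Nat.add_pos_left hk l)) (ih₃ hks' hls'))

theorem StLin_harmW {ks ls : List ℕ} (hks : ∀ k ∈ ks, 0 < k) (hls : ∀ l ∈ ls, 0 < l) :
    StLin (harmW ks ls) =
      nharmBilin (StLin (word (zListW ks))) (StLin (word (zListW ls))) := by
  have word_nil : word (zListW []) = 1 := rfl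
  induction ks, ls using harmW.induct with
  | case1 ls =>
    rw [harmW, word_nil, StLin_one, nharmBilin_one_left (StLin_mem_H1 (word_zListW_mem_H1 hls))]
  | case2 k ks =>
    rw [harmW, word_nil, StLin_one, nharmBilin_comm,
      nharmBilin_one_left (StLin_mem_H1 (word_zListW_mem_H1 hks))]
  | case3 k ks l ls ih₁ ih₂ ih₃ =>
    obtain ⟨hk, hks'⟩ := List.forall_mem_cons.1 hks
    obtain ⟨hl, hls'⟩ := List.forall_mem_cons.1 hls
    have hP := word_zListW_mem_H1 hks'
    have hQ := word_zListW_mem_H1 hls'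
    rw [harmW, map_add, map_add, StLin_z_mul hk (harmW_mem_H1 hks' hls),
      StLin_z_mul hl (harmW_mem_H1 hks hls'),
      StLin_z_mul (Nat.add_pos_left hk l) (harmW_mem_H1 hks' hls'), ih₁ hks' hls, ih₂ hks hls',
      ih₃ hks' hls', word_zListW_cons, word_zListW_cons, StLin_z_mul hk hP, StLin_z_mul hl hQ,
      nharmBilin_zTwist_zTwist hk hl (StLin_mem_H1 hP) (StLin_mem_H1 hQ)]

theorem StLin_harmBilin {a b : H} (ha : a ∈ H1) (hb : b ∈ H1) :
    StLin (harmBilin a b) = nharmBilin (StLin a) (StLin b) := by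
  have h_words : ∀ l, IsH1Word l → ∀ m, IsH1Word m →
      harmBilin.compr₂ StLin (word (ofList l)) (word (ofList m)) =
        nharmBilin.compl₁₂ StLin StLin (word (ofList l)) (word (ofList m)) := by
    intro l hl m hm
    rw [LinearMap.compr₂_apply, LinearMap.compl₁₂_apply, harmBilin, wordLift₂_word,
      StLin_harmW (fun _ => pos_of_mem_toZ) (fun _ => pos_of_mem_toZ), hl.zListW_toZ,
      hm.zListW_toZ]
  simpa only [LinearMap.compr₂_apply, LinearMap.compl₁₂_apply] using bilin_eqOn_H1 h_words ha hb

/-! ### The shuffle products -/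

theorem nshW_nil_right (l : List Letter) : nshW l [] = word (ofList l) := by
  cases l <;> rw [nshW]

theorem nshW_comm (l m : List Letter) : nshW l m = nshW m l := by
  induction l, m using nshW.induct with
  | case1 m => rw [nshW, nshW_nil_right]
  | case2 u l => rw [nshW, nshW]
  | case3 u l v m ih₁ ih₂ =>
    rw [nshW, nshW, ih₁, ih₂]
    abel

theorem nshBilin_comm (a b : H) : nshBilin a b = nshBilin b a := by
  suffices nshBilin = nshBilin.flip from LinearMap.congr_fun₂ this a b
  refine bilin_ext_word fun v w => ?_
  simp only [LinearMap.flip_apply, nshBilin, wordLift₂_word, nshW_comm]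

theorem nshBilin_one_left (a : H) : nshBilin 1 a = a := by
  suffices nshBilin 1 = LinearMap.id from LinearMap.congr_fun this a
  refine linearMap_ext_word fun w => ?_
  simp [nshBilin, ← word_one, wordLift₂_word, nshW]

theorem nshBilin_letter_mul_letter_mul (u v : Letter) (P Q : H) :
    nshBilin (word (of u) * P) (word (of v) * Q) =
      word (of u) * nshBilin P (word (of v) * Q) + word (of v) * nshBilin (word (of u) * P) Q -
        ε P • (word (of (τ u)) * (word (of v) * Q)) -
        ε Q • (word (of (τ v)) * (word (of u) * P)) := by
  let mulLetter (t : Letter) : H →ₗ[ℚ] H := LinearMap.mulLeft ℚ (word (of t))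
  let smulBy : H →ₗ[ℚ] H →ₗ[ℚ] H := (LinearMap.lsmul ℚ H).comp augmentation.toLinearMap
  suffices nshBilin.compl₁₂ (mulLetter u) (mulLetter v) =
      (nshBilin.compl₁₂ .id (mulLetter v)).compr₂ (mulLetter u) +
        (nshBilin.compl₁₂ (mulLetter u) .id).compr₂ (mulLetter v) -
        smulBy.compl₁₂ .id (mulLetter (τ u) ∘ₗ mulLetter v) -
        (smulBy.compl₁₂ .id (mulLetter (τ v) ∘ₗ mulLetter u)).flip from
    LinearMap.congr_fun₂ this P Q
  refine bilin_ext_word fun p q => ?_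
  simp only [mulLetter, smulBy, LinearMap.compl₁₂_apply, LinearMap.compr₂_apply,
    LinearMap.add_apply, LinearMap.sub_apply, LinearMap.flip_apply, LinearMap.comp_apply,
    LinearMap.mulLeft_apply, LinearMap.id_apply, LinearMap.lsmul_apply, nshBilin,
    AlgHom.toLinearMap_apply]
  simp only [← word_mul, wordLift₂_word, toList_of_mul]
  rw [nshW, ← augmentation_word_ofList, ← augmentation_word_ofList]
  rfl

/-- The operator which corresponds under `S̃` to left multiplication by the letter `u`. -/
noncomputable def letterTwist : Letter → H →ₗ[ℚ] H
  | Letter.x => LinearMap.mulLeft ℚ X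
  | Letter.y => zTwist 1

theorem StLin_letter_mul {u : Letter} {a : H} (ha : a ∈ H1) (hu : u = Letter.x → ε a = 0) :
    StLin (word (of u) * a) = letterTwist u (StLin a) := by
  cases u with
  | x =>
    rw [← X, StLin_mul_of_augmentation_eq_zero _ ha (hu rfl), S2_X]
    rfl
  | y => exact StLin_z_mul one_pos ha

theorem zTwist_one_apply (P : H) : zTwist 1 P = Y * P - X * (P - ε P • 1) := by
  rw [zTwist_apply, xShift_apply, pow_one, z_succ, pow_zero, one_mul]

theorem nshBilin_X_mul_X_mul {P Q : H} (hP : ε P = 0) (hQ : ε Q = 0) :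
    nshBilin (X * P) (X * Q) = X * nshBilin P (X * Q) + X * nshBilin (X * P) Q := by
  rw [X, nshBilin_letter_mul_letter_mul, hP, hQ, zero_smul, zero_smul, sub_zero, sub_zero]

theorem nshBilin_Y_mul_X_mul (P : H) {Q : H} (hQ : ε Q = 0) :
    nshBilin (Y * P) (X * Q) =
      Y * nshBilin P (X * Q) + X * nshBilin (Y * P) Q - ε P • (X * (X * Q)) := by
  rw [X, Y, nshBilin_letter_mul_letter_mul, hQ, zero_smul, sub_zero, τ]

theorem nshBilin_X_mul_Y_mul {P : H} (hP : ε P = 0) (Q : H) :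
    nshBilin (X * P) (Y * Q) =
      X * nshBilin P (Y * Q) + Y * nshBilin (X * P) Q - ε Q • (X * (X * P)) := by
  rw [X, Y, nshBilin_letter_mul_letter_mul, hP, zero_smul, sub_zero, τ]

theorem nshBilin_Y_mul_Y_mul (P Q : H) :
    nshBilin (Y * P) (Y * Q) = Y * nshBilin P (Y * Q) + Y * nshBilin (Y * P) Q -
      ε P • (X * (Y * Q)) - ε Q • (X * (Y * P)) :=
  nshBilin_letter_mul_letter_mul Letter.y Letter.y P Q

theorem nshBilin_sub_augmentation (P Q : H) :
    nshBilin (P - ε P • 1) Q = nshBilin P Q - ε P • Q := by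
  rw [map_sub, map_smul, LinearMap.sub_apply, LinearMap.smul_apply, nshBilin_one_left]

theorem augmentation_sub_augmentation (P : H) : ε (P - ε P • 1) = 0 := by simp

theorem nshBilin_zTwist_one_X_mul (P : H) {Q : H} (hQ : ε Q = 0) :
    nshBilin (zTwist 1 P) (X * Q) =
      (Y - X) * nshBilin P (X * Q) + X * nshBilin (zTwist 1 P) Q := by
  have hP' := augmentation_sub_augmentation P
  have h_sub := nshBilin_sub_augmentation P
  rw [zTwist_one_apply]
  generalize P - ε P • 1 = P' at hP' h_sub
  simp only [map_sub, LinearMap.sub_apply, nshBilin_Y_mul_X_mul P hQ,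
    nshBilin_X_mul_X_mul hP' hQ, h_sub, mul_sub, sub_mul, mul_smul_comm]
  abel

theorem nshBilin_zTwist_one_zTwist_one (P Q : H) :
    nshBilin (zTwist 1 P) (zTwist 1 Q) =
      (Y - X) * nshBilin P (zTwist 1 Q) + (Y - X) * nshBilin (zTwist 1 P) Q := by
  have hP' := augmentation_sub_augmentation P
  have hQ' := augmentation_sub_augmentation Q
  have h_subP := nshBilin_sub_augmentation P
  have h_subQ (a : H) : nshBilin a (Q - ε Q • 1) = nshBilin a Q - ε Q • a := by
    rw [nshBilin_comm, nshBilin_sub_augmentation, nshBilin_comm Q]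
  rw [zTwist_one_apply, zTwist_one_apply]
  generalize P - ε P • 1 = P' at hP' h_subP
  generalize Q - ε Q • 1 = Q' at hQ' h_subQ
  simp only [map_sub, LinearMap.sub_apply, nshBilin_Y_mul_Y_mul, nshBilin_Y_mul_X_mul P hQ',
    nshBilin_X_mul_Y_mul hP' Q, nshBilin_X_mul_X_mul hP' hQ', h_subP, h_subQ, mul_sub, sub_mul,
    mul_smul_comm]
  abel

theorem nshBilin_letterTwist_letterTwist {u v : Letter} {P Q : H}
    (hP : u = Letter.x → ε P = 0) (hQ : v = Letter.x → ε Q = 0) :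
    nshBilin (letterTwist u P) (letterTwist v Q) =
      S2 (word (of u)) * nshBilin P (letterTwist v Q) +
        S2 (word (of v)) * nshBilin (letterTwist u P) Q := by
  cases u <;> cases v <;>
  simp only [word_of_x, word_of_y, S2_X, S2_Y, letterTwist, LinearMap.mulLeft_apply]
  · exact nshBilin_X_mul_X_mul (hP rfl) (hQ rfl)
  · rw [nshBilin_comm, nshBilin_zTwist_one_X_mul Q (hP rfl), add_comm, nshBilin_comm _ P,
      nshBilin_comm Q]
  · exact nshBilin_zTwist_one_X_mul P (hQ rfl)
  · exact nshBilin_zTwist_one_zTwist_one P Q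

theorem augmentation_shW (l m : List Letter) : ε (shW l m) = δ l * δ m := by
  cases l <;> cases m <;> simp [shW, word_one, word_mul, augmentation_letter, δ]

theorem shW_mem_H1 {l m : List Letter} (hl : IsH1Word l) (hm : IsH1Word m) : shW l m ∈ H1 := by
  induction l, m using shW.induct with
  | case1 m => rw [shW]; exact hm.mem_H1
  | case2 u l => rw [shW]; exact hl.mem_H1
  | case3 u l v m ih₁ ih₂ =>
    rw [shW]
    exact add_mem
      (mul_mem_H1_of_augmentation_eq_zero _ (ih₁ (isH1Word_cons_iff.1 hl).1 hm)
        (by simp [augmentation_shW, δ]))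
      (mul_mem_H1_of_augmentation_eq_zero _ (ih₂ hl (isH1Word_cons_iff.1 hm).1)
        (by simp [augmentation_shW, δ]))

theorem StLin_shW {l m : List Letter} (hl : IsH1Word l) (hm : IsH1Word m) :
    StLin (shW l m) = nshBilin (StLin (word (ofList l))) (StLin (word (ofList m))) := by
  have word_nil : word (ofList []) = 1 := rfl
  induction l, m using shW.induct with
  | case1 m => rw [shW, word_nil, StLin_one, nshBilin_one_left]
  | case2 u l => rw [shW, word_nil, StLin_one, nshBilin_comm, nshBilin_one_left]
  | case3 u l v m ih₁ ih₂ =>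
    have hl' := (isH1Word_cons_iff.1 hl).1
    have hm' := (isH1Word_cons_iff.1 hm).1
    have hP := hl.augmentation_tail_eq_zero
    have hQ := hm.augmentation_tail_eq_zero
    rw [shW, map_add,
      StLin_mul_of_augmentation_eq_zero _ (shW_mem_H1 hl' hm) (by simp [augmentation_shW, δ]),
      StLin_mul_of_augmentation_eq_zero _ (shW_mem_H1 hl hm') (by simp [augmentation_shW, δ]),
      ih₁ hl' hm, ih₂ hl hm', word_ofList_cons u, word_ofList_cons v,
      StLin_letter_mul hl'.mem_H1 hP, StLin_letter_mul hm'.mem_H1 hQ,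
      nshBilin_letterTwist_letterTwist]
    · rwa [augmentation_StLin hl'.mem_H1]
    · rwa [augmentation_StLin hm'.mem_H1]

theorem StLin_shBilin {a b : H} (ha : a ∈ H1) (hb : b ∈ H1) :
    StLin (shBilin a b) = nshBilin (StLin a) (StLin b) := by
  have h_words : ∀ l, IsH1Word l → ∀ m, IsH1Word m →
      shBilin.compr₂ StLin (word (ofList l)) (word (ofList m)) =
        nshBilin.compl₁₂ StLin StLin (word (ofList l)) (word (ofList m)) := by
    intro l hl m hm
    rw [LinearMap.compr₂_apply, LinearMap.compl₁₂_apply, shBilin, wordLift₂_word, toList_ofList,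
      toList_ofList, StLin_shW hl hm]
  simpa only [LinearMap.compr₂_apply, LinearMap.compl₁₂_apply] using bilin_eqOn_H1 h_words ha hb

end H

/-- For all `w₁, w₂ ∈ H¹`: `S̃(w₁ * w₂) = S̃(w₁) *̄ S̃(w₂)` and
`S̃(w₁ ш w₂) = S̃(w₁) ш̄ S̃(w₂)`. -/
theorem St_harm_sh :
    ∀ w1 ∈ H1, ∀ w2 ∈ H1,
      St (harm w1 w2) = nharm (St w1) (St w2) ∧
      St (sh w1 w2) = nsh (St w1) (St w2) := by
  intro w1 h1 w2 h2
  simp only [← StLin_apply, ← harmBilin_apply, ← nharmBilin_apply, ← shBilin_apply,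
    ← nshBilin_apply]
  exact ⟨StLin_harmBilin h1 h2, StLin_shBilin h1 h2⟩
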